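/- arXiv:2504.20739 — 2 statements merged into one kernel-verified Lean document; each statement's English description precedes it below -/
import Mathlib

section
/- For an integer d ≥ 3 and integers ℓ ≥ 2 define N(d,ℓ) = 2·∑_{k=0}^{d−2} C(2k, ℓ−2). Then the sequence ℓ ↦ N(d,ℓ) is unimodal with mode d: N(d,ℓ) ≤ N(d,ℓ+1) for all ℓ with 2 ≤ ℓ ≤ d−1, and N(d,ℓ) ≥ N(d,ℓ+1) for all ℓ ≥ d. Moreover, if d ≥ 4 the mode is unique: N(d,ℓ) < N(d,d) for every ℓ ≥ 2 with ℓ ≠ d. -/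
/-- `N d ℓ = 2 · ∑_{k=0}^{d-2} C(2k, ℓ-2)`, the number of monotone paths of length `ℓ`
on the `d`-dimensional cross-polytope for a generic direction. -/
def crossPathCount (d ℓ : ℕ) : ℕ :=
  2 * ∑ k ∈ Finset.range (d - 1), Nat.choose (2 * k) (ℓ - 2)

def cpS (n m : ℕ) : ℕ := ∑ k ∈ Finset.range (n + 1), Nat.choose (2 * k) m

lemma cpS_succ (n m : ℕ) : cpS (n + 1) m = cpS n m + Nat.choose (2 * n + 2) m := by
  unfold cpS
  rw [Finset.sum_range_succ]
  rfl

lemma cpS_rec (n m : ℕ) : 2 * cpS n (m + 1) + cpS n m = Nat.choose (2 * n + 2) (m + 2) := by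
  induction n with
  | zero =>
    rcases m with _ | m
    · simp [cpS]
    · simp [cpS, Nat.choose_eq_zero_of_lt]
  | succ n ih =>
    rw [cpS_succ, cpS_succ]
    have e : 2 * (n + 1) + 2 = 2 * n + 2 + 1 + 1 := by ring
    rw [e, Nat.choose_succ_succ' (2 * n + 2 + 1) (m + 1), Nat.choose_succ_succ' (2 * n + 2) (m + 1),
      Nat.choose_succ_succ' (2 * n + 2) m]
    linarith

lemma cpS_zero (n : ℕ) : cpS n 0 = n + 1 := by simp [cpS]

lemma cpS_one (n : ℕ) : cpS n 1 = n * (n + 1) := by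
  induction n with
  | zero => simp [cpS]
  | succ n ih => rw [cpS_succ, ih, Nat.choose_one_right]; ring

lemma cpS_rel (n m t : ℕ) (h : 2 * n = m + t) :
    (m + 3) * (2 * cpS n (m + 2) + cpS n (m + 1)) = t * (2 * cpS n (m + 1) + cpS n m) := by
  rw [cpS_rec n (m + 1), cpS_rec n m]
  have := Nat.choose_succ_right_eq (2 * n + 2) (m + 2)
  have e : 2 * n + 2 - (m + 2) = t := by omega
  rw [e] at this
  linarith

lemma cpS_pos (n m : ℕ) (h : m ≤ 2 * n) : 0 < cpS n m := by
  unfold cpS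
  rw [Finset.sum_range_succ]
  have := Nat.choose_pos h
  omega

lemma cpS_bounds (n m : ℕ) (hn : m + 1 ≤ n) : ∀ t : ℕ, 2 * n = m + t →
    t * cpS n m ≤ (m + 3) * cpS n (m + 1) ∧ (m + 2) * cpS n (m + 1) ≤ (t + 1) * cpS n m := by
  induction m with
  | zero =>
    intro t ht
    have : t = 2 * n := by omega
    subst this
    rw [cpS_zero, cpS_one]
    constructor <;> nlinarith
  | succ m ih =>
    intro s hs
    obtain ⟨h1, h2⟩ := ih (by omega) (s + 1) (by omega)
    have hr := cpS_rel n m (s + 1) (by omega)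
    generalize cpS n m = x at *
    have e : m + 1 + 1 = m + 2 := rfl
    rw [e]
    generalize cpS n (m + 1) = y at *
    generalize cpS n (m + 2) = z at *
    have hm : m + 3 ≤ s := by omega
    constructor
    · obtain ⟨a, rfl⟩ := Nat.exists_eq_add_of_le hm
      zify at *
      have h3 := mul_le_mul_of_nonneg_left h2 (show (0:ℤ) ≤ (m + 4) * (m + 3 + a + 1) by positivity)
      have hp : (0:ℤ) < 2 * (m + 3) * (m + 3 + a + 2) := by positivity
      refine le_of_mul_le_mul_left ?_ hp
      have h4 : (0:ℤ) ≤ (2 * (m + 4 + a)^2 + (m + 4) * (m + 4 + a) - (m + 2) * (m + 3)) * y := by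
        apply mul_nonneg _ (by positivity)
        ring_nf
        positivity
      linear_combination h3 + h4 - (m + 4) * (m + 5 + a) * hr
    · nlinarith

lemma cpS_lt (n m : ℕ) (h2 : 2 ≤ n) (h : m + 1 ≤ n) : cpS n m < cpS n (m + 1) := by
  rcases m with _ | m
  · rw [cpS_zero, cpS_one]; nlinarith
  · obtain ⟨a, ha⟩ := Nat.exists_eq_add_of_le h
    have ht : 2 * n = m + (m + 4 + 2 * a) := by omega
    obtain ⟨-, h2⟩ := cpS_bounds n m (by omega) _ ht
    have hr := cpS_rel n m _ ht
    have hy := cpS_pos n (m + 1) (by omega)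
    have e : m + 1 + 1 = m + 2 := rfl
    rw [e]
    clear ht ha h
    generalize cpS n m = x at *
    generalize cpS n (m + 1) = y at *
    generalize cpS n (m + 2) = z at *
    zify at *
    have h3 := mul_le_mul_of_nonneg_left h2 (show (0:ℤ) ≤ m + 4 + 2 * a by positivity)
    have hp : (0:ℤ) < 2 * (m + 3) * (m + 5 + 2 * a) := by positivity
    refine lt_of_mul_lt_mul_left ?_ hp.le
    have h4 : (0:ℤ) < (2 * (m + 4 + 2 * a)^2 + (m + 4 + 2 * a) - m - 3
        - 2 * (m + 3) * (m + 5 + 2 * a)) * y := by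
      apply mul_pos _ hy
      ring_nf
      positivity
    linear_combination h3 + h4 - (m + 5 + 2 * a) * hr

lemma cp_choose_le (k m : ℕ) (h : k ≤ m) :
    Nat.choose (2 * k) (m + 1) ≤ Nat.choose (2 * k) m := by
  have := Nat.choose_succ_right_eq (2 * k) m
  have h' : 2 * k - m ≤ m + 1 := by omega
  have := Nat.mul_le_mul_left (Nat.choose (2 * k) m) h'
  nlinarith

lemma cpS_anti (n m : ℕ) (h : n ≤ m) : cpS n (m + 1) ≤ cpS n m := by
  apply Finset.sum_le_sum
  intro k hk
  have := Finset.mem_range.1 hk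
  exact cp_choose_le k m (by omega)

lemma cpS_anti_lt (n : ℕ) : cpS n (n + 1) < cpS n n := by
  apply Finset.sum_lt_sum
  · intro k hk
    have := Finset.mem_range.1 hk
    exact cp_choose_le k n (by omega)
  · refine ⟨n, by simp, ?_⟩
    have := Nat.choose_succ_right_eq (2 * n) n
    have e : 2 * n - n = n := by omega
    rw [e] at this
    have hp : 0 < Nat.choose (2 * n) n := Nat.choose_pos (by omega)
    nlinarith

lemma cpS_lt_of_lt (n m : ℕ) (h2 : 2 ≤ n) (h : m < n) : cpS n m < cpS n n := by
  have key : ∀ j, m + 1 + j ≤ n → cpS n m < cpS n (m + 1 + j) := by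
    intro j
    induction j with
    | zero => intro hj; exact cpS_lt n m h2 hj
    | succ j ih => intro hj; exact (ih (by omega)).trans (cpS_lt n (m + 1 + j) h2 hj)
  have := key (n - m - 1) (by omega)
  rwa [show m + 1 + (n - m - 1) = n by omega] at this

lemma cpS_lt_of_gt (n m : ℕ) (h : n < m) : cpS n m < cpS n n := by
  obtain ⟨j, rfl⟩ := Nat.exists_eq_add_of_lt h
  induction j with
  | zero => exact cpS_anti_lt n
  | succ j ih => exact (cpS_anti n (n + j + 1) (by omega)).trans_lt (ih (by omega))

lemma crossPathCount_eq (n m : ℕ) : crossPathCount (n + 2) (m + 2) = 2 * cpS n m := rfl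

/-- for `d ≥ 3` the sequence `ℓ ↦ N(d,ℓ)` is unimodal with mode `d`,
and for `d ≥ 4` the mode is unique. -/
theorem crossPathCount_unimodal (d : ℕ) (hd : 3 ≤ d) :
    (∀ ℓ : ℕ, 2 ≤ ℓ → ℓ ≤ d - 1 → crossPathCount d ℓ ≤ crossPathCount d (ℓ + 1)) ∧
    (∀ ℓ : ℕ, d ≤ ℓ → crossPathCount d (ℓ + 1) ≤ crossPathCount d ℓ) ∧
    (4 ≤ d → ∀ ℓ : ℕ, 2 ≤ ℓ → ℓ ≠ d → crossPathCount d ℓ < crossPathCount d d) := by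
  obtain ⟨n, rfl⟩ : ∃ n, d = n + 2 := ⟨d - 2, by omega⟩
  refine ⟨?_, ?_, ?_⟩
  · intro l hl hl'
    obtain ⟨m, rfl⟩ : ∃ m, l = m + 2 := ⟨l - 2, by omega⟩
    rw [show m + 2 + 1 = m + 1 + 2 by ring, crossPathCount_eq, crossPathCount_eq]
    apply Nat.mul_le_mul_left
    by_cases h2 : 2 ≤ n
    · exact (cpS_lt n m h2 (by omega)).le
    · obtain rfl : n = 1 := by omega
      obtain rfl : m = 0 := by omega
      rw [cpS_zero, cpS_one]
  · intro l hl
    obtain ⟨m, rfl⟩ : ∃ m, l = m + 2 := ⟨l - 2, by omega⟩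
    rw [show m + 2 + 1 = m + 1 + 2 by ring, crossPathCount_eq, crossPathCount_eq]
    exact Nat.mul_le_mul_left _ (cpS_anti n m (by omega))
  · intro h4 l hl hne
    obtain ⟨m, rfl⟩ : ∃ m, l = m + 2 := ⟨l - 2, by omega⟩
    rw [crossPathCount_eq, crossPathCount_eq]
    have : cpS n m < cpS n n := by
      rcases lt_or_gt_of_ne (show m ≠ n by omega) with h | h
      · exact cpS_lt_of_lt n m (by omega) h
      · exact cpS_lt_of_gt n m h
    omega
end

section
/- Fix an integer d ≥ 4 and set β = d/2 − 2, and fix an integer p ≥ 1. Let X₁, …, X_{n+1} be i.i.d. random points with law μ_β, set Qₙ = convexHull ℝ {X₁, …, Xₙ} and Q_{n+1} = convexHull ℝ {X₁, …, X_{n+1}}, and let f₀ denote the number of extreme points. Then there exist a constant c > 0 and an integer N₀ such that for all n ≥ N₀: E[ |f₀(Q_{n+1}) − f₀(Qₙ)|^p ] ≤ c·(log n)^{p+1−1/(d−1)}·n^{1/(d−1)−1}. -/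
open MeasureTheory

/-- The `β`-distribution on the closed unit disk of `ℝ²`. -/
noncomputable def betaMeasure (β : ℝ) : Measure (EuclideanSpace ℝ (Fin 2)) :=
  volume.withDensity fun x =>
    ENNReal.ofReal (if ‖x‖ ≤ 1 then (β + 1) / Real.pi * (1 - ‖x‖ ^ 2) ^ β else 0)

instance (β : ℝ) : SigmaFinite (betaMeasure β) :=
  SigmaFinite.withDensity_ofReal _

/-- The joint law of `n` i.i.d. points with law `μ_β`, realized on `(ℝ²)ⁿ`. -/
noncomputable def betaPi (β : ℝ) (n : ℕ) :
    Measure (Fin n → EuclideanSpace ℝ (Fin 2)) :=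
  Measure.pi fun _ => betaMeasure β

/-- The number of vertices (extreme points) of the convex hull of a point
configuration, as a real number. -/
noncomputable def vertCount {n : ℕ} (ω : Fin n → EuclideanSpace ℝ (Fin 2)) : ℝ :=
  Nat.card (Set.extremePoints ℝ (convexHull ℝ (Set.range ω)))


abbrev E2 := EuclideanSpace ℝ (Fin 2)

lemma beta_dens_meas (β : ℝ) : Measurable fun x : E2 =>
    ENNReal.ofReal (if ‖x‖ ≤ 1 then (β + 1) / Real.pi * (1 - ‖x‖ ^ 2) ^ β else 0) := by
  apply Measurable.ennreal_ofReal
  apply Measurable.ite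
  · exact measurableSet_le measurable_norm measurable_const
  · fun_prop
  · fun_prop

lemma beta_radial (β : ℝ) (hβ : 0 ≤ β) :
    ∫ y in (0:ℝ)..1, y * (1 - y ^ 2) ^ β = 1 / (2 * (β + 1)) := by
  have h := intervalIntegral.integral_eq_sub_of_hasDerivAt (a := 0) (b := 1)
    (f := fun y : ℝ => -(1 - y ^ 2) ^ (β + 1) / (2 * (β + 1)))
    (f' := fun y : ℝ => y * (1 - y ^ 2) ^ β) (fun y _ => by
      have h1 : HasDerivAt (fun y : ℝ => 1 - y ^ 2) (-(2 * y)) y := by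
        simpa using (hasDerivAt_pow 2 y).const_sub 1
      have h2 := (h1.rpow_const (p := β + 1) (Or.inr (by linarith))).neg.div_const (2 * (β + 1))
      refine h2.congr_deriv ?_
      have : β + 1 ≠ 0 := by linarith
      rw [add_sub_cancel_right]
      field_simp) (by
      apply Continuous.intervalIntegrable
      refine continuous_id.mul (Continuous.rpow_const (by fun_prop) (fun x => Or.inr hβ)))
  rw [h]
  have : β + 1 ≠ 0 := by linarith
  simp [Real.zero_rpow this]
  field_simp

lemma beta_prob (β : ℝ) (hβ : 0 ≤ β) : IsProbabilityMeasure (betaMeasure β) := by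
  constructor
  rw [betaMeasure, withDensity_apply _ MeasurableSet.univ, Measure.restrict_univ]
  set g : ℝ → ℝ := fun r => if r ≤ 1 then (β + 1) / Real.pi * (1 - r ^ 2) ^ β else 0 with hg
  have hpi := Real.pi_pos
  have hnn : ∀ x : E2, 0 ≤ g ‖x‖ := by
    intro x
    simp only [hg]
    split_ifs with h
    · have : 0 ≤ 1 - ‖x‖ ^ 2 := by nlinarith [norm_nonneg x]
      positivity
    · rfl
  have hI := integral_fun_norm_addHaar (volume : Measure E2) g
  have hR : ∫ (y : ℝ) in Set.Ioi 0, y ^ (Module.finrank ℝ E2 - 1) • g y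
      = (β + 1) / Real.pi * (1 / (2 * (β + 1))) := by
    rw [← beta_radial β hβ, ← intervalIntegral.integral_const_mul,
      intervalIntegral.integral_of_le zero_le_one]
    have : Set.Ioi (0:ℝ) = Set.Ioc 0 1 ∪ Set.Ioi 1 := by
      rw [Set.Ioc_union_Ioi_eq_Ioi zero_le_one]
    rw [← integral_indicator measurableSet_Ioi, ← integral_indicator measurableSet_Ioc]
    congr 1
    ext y
    simp only [Set.indicator, Set.mem_Ioi, Set.mem_Ioc, finrank_euclideanSpace_fin, hg,
      smul_eq_mul]
    by_cases h0 : 0 < y <;> by_cases h1 : y ≤ 1 <;> simp [h0, h1]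
    ring
  have hV : (volume : Measure E2).real (Metric.ball 0 1) = Real.pi := by
    rw [Measure.real, EuclideanSpace.volume_ball_fin_two]
    simp [hpi.le]
  have hb : β + 1 ≠ 0 := by linarith
  have hone : ∫ x : E2, g ‖x‖ = 1 := by
    rw [hI, hR, hV, finrank_euclideanSpace_fin]
    simp only [smul_eq_mul, nsmul_eq_mul]
    field_simp
    norm_num
  have hint : Integrable (fun x : E2 => g ‖x‖) := by
    by_contra hc
    rw [integral_undef hc] at hone
    norm_num at hone
  rw [← ofReal_integral_eq_lintegral_ofReal hint (Filter.Eventually.of_forall hnn), hone]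
  simp

lemma beta_le (β t : ℝ) (hβ : 0 ≤ β) (S B : Set E2) (hB : MeasurableSet B)
    (hS : MeasurableSet S) (hSB : ∀ y ∈ S, ‖y‖ ≤ 1 → y ∈ B ∧ 1 - ‖y‖ ^ 2 ≤ t) :
    betaMeasure β S ≤ ENNReal.ofReal ((β + 1) / Real.pi * t ^ β) * volume B := by
  have hpi := Real.pi_pos
  rw [betaMeasure, withDensity_apply' _]
  calc _ ≤ ∫⁻ y in S, B.indicator (fun _ => ENNReal.ofReal ((β + 1) / Real.pi * t ^ β)) y := by
        refine setLIntegral_mono' hS fun y hy => ?_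
        split_ifs with h1
        · obtain ⟨h2, h3⟩ := hSB y hy h1
          rw [Set.indicator_of_mem h2]
          have : 0 ≤ 1 - ‖y‖ ^ 2 := by nlinarith [norm_nonneg y]
          gcongr
        · simp
    _ ≤ ∫⁻ y, B.indicator (fun _ => ENNReal.ofReal ((β + 1) / Real.pi * t ^ β)) y :=
        setLIntegral_le_lintegral _ _
    _ = _ := by rw [lintegral_indicator_const hB]

lemma beta_ge (β t : ℝ) (hβ : 0 ≤ β) (ht : 0 ≤ t) (S B : Set E2) (hB : MeasurableSet B)
    (hBS : B ⊆ S) (h : ∀ y ∈ B, ‖y‖ ≤ 1 ∧ t ≤ 1 - ‖y‖ ^ 2) :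
    ENNReal.ofReal ((β + 1) / Real.pi * t ^ β) * volume B ≤ betaMeasure β S := by
  have hpi := Real.pi_pos
  refine le_trans ?_ (measure_mono hBS)
  rw [betaMeasure, withDensity_apply _ hB, ← setLIntegral_const]
  refine setLIntegral_mono' hB fun y hy => ?_
  obtain ⟨h1, h2⟩ := h y hy
  rw [if_pos h1]
  gcongr

lemma box_volume (b : OrthonormalBasis (Fin 2) ℝ E2) (a1 a2 c1 c2 : ℝ) :
    MeasurableSet {y : E2 | inner ℝ (b 0) y ∈ Set.Icc a1 a2 ∧ inner ℝ (b 1) y ∈ Set.Icc c1 c2} ∧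
    volume {y : E2 | inner ℝ (b 0) y ∈ Set.Icc a1 a2 ∧ inner ℝ (b 1) y ∈ Set.Icc c1 c2}
      = ENNReal.ofReal (a2 - a1) * ENNReal.ofReal (c2 - c1) := by
  have hmp := (PiLp.volume_preserving_ofLp (Fin 2)).comp b.measurePreserving_repr
  have hset : {y : E2 | inner ℝ (b 0) y ∈ Set.Icc a1 a2 ∧ inner ℝ (b 1) y ∈ Set.Icc c1 c2}
      = (WithLp.ofLp ∘ b.repr) ⁻¹' (Set.Icc ![a1, c1] ![a2, c2]) := by
    ext y
    simp [Pi.le_def, Fin.forall_fin_two, b.repr_apply_apply]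
    tauto
  rw [hset]
  refine ⟨hmp.measurable measurableSet_Icc, ?_⟩
  rw [hmp.measure_preimage measurableSet_Icc.nullMeasurableSet, Real.volume_Icc_pi]
  simp

lemma exists_basis (u : E2) (hu : ‖u‖ = 1) :
    ∃ b : OrthonormalBasis (Fin 2) ℝ E2, b 0 = u := by
  have h := Orthonormal.exists_orthonormalBasis_extension_of_card_eq (𝕜 := ℝ) (E := E2)
    (ι := Fin 2) (by simp) (v := fun _ => u) (s := {0}) (by
      constructor
      · intro i; simpa using hu
      · intro i j hij
        exact absurd (Subsingleton.elim i j) hij)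
  obtain ⟨b, hb⟩ := h
  exact ⟨b, hb 0 rfl⟩

lemma basis_norm (b : OrthonormalBasis (Fin 2) ℝ E2) (y : E2) :
    ‖y‖ ^ 2 = inner ℝ (b 0) y ^ 2 + inner ℝ (b 1) y ^ 2 := by
  rw [← b.sum_sq_norm_inner_right y]
  simp

lemma rpow_split (β h : ℝ) (hh : 0 < h) : h ^ (β + 3 / 2) = h ^ β * (h * √h) := by
  rw [Real.sqrt_eq_rpow, Real.rpow_add hh, show (3:ℝ)/2 = 1 + 1/2 by norm_num,
    Real.rpow_add hh, Real.rpow_one]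

lemma cap_upper (β : ℝ) (hβ : 0 ≤ β) : ∃ C : ℝ, 0 < C ∧ ∀ (u : E2) (h : ℝ), ‖u‖ = 1 → 0 < h →
    h ≤ 1 → betaMeasure β {y | 1 - h ≤ inner ℝ u y} ≤ ENNReal.ofReal (C * h ^ (β + 3 / 2)) := by
  have hpi := Real.pi_pos
  refine ⟨(β + 1) / Real.pi * 2 ^ β * (2 * √2), by positivity, fun u h hu h0 h1 => ?_⟩
  obtain ⟨b, rfl⟩ := exists_basis u hu
  obtain ⟨hm, hv⟩ := box_volume b (1 - h) 1 (-√(2 * h)) (√(2 * h))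
  refine (beta_le β (2 * h) hβ _ _ hm (measurableSet_le (by fun_prop) (by fun_prop)) ?_).trans ?_
  · intro y hy hn
    have hN := basis_norm b y
    simp only [Set.mem_ofPred_eq, Set.mem_Icc] at hy ⊢
    have hn2 : ‖y‖ ^ 2 ≤ 1 := by nlinarith [norm_nonneg y]
    refine ⟨⟨⟨hy, by nlinarith⟩, ?_⟩, by nlinarith⟩
    apply abs_le.1
    apply Real.abs_le_sqrt
    nlinarith
  · rw [hv, ← ENNReal.ofReal_mul (by linarith), ← ENNReal.ofReal_mul (by positivity)]
    apply ENNReal.ofReal_le_ofReal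
    rw [rpow_split β h h0, Real.mul_rpow (by norm_num) h0.le, Real.sqrt_mul (by norm_num)]
    apply le_of_eq
    ring

lemma cap_lower (β : ℝ) (hβ : 0 ≤ β) : ∃ C : ℝ, 0 < C ∧ ∀ (u : E2) (h : ℝ), ‖u‖ = 1 → 0 < h →
    h ≤ 1 → ENNReal.ofReal (C * h ^ (β + 3 / 2)) ≤ betaMeasure β {y | 1 - h ≤ inner ℝ u y} := by
  have hpi := Real.pi_pos
  refine ⟨(β + 1) / Real.pi * (1 / 2) ^ β * (1 / 2), by positivity, fun u h hu h0 h1 => ?_⟩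
  obtain ⟨b, rfl⟩ := exists_basis u hu
  obtain ⟨hm, hv⟩ := box_volume b (1 - h) (1 - h / 2) (-(√h / 2)) (√h / 2)
  refine le_trans ?_ (beta_ge β (1 / 2 * h) hβ (by positivity) _ _ hm ?_ ?_)
  · rw [hv, ← ENNReal.ofReal_mul (by linarith), ← ENNReal.ofReal_mul (by positivity)]
    apply ENNReal.ofReal_le_ofReal
    rw [rpow_split β h h0, Real.mul_rpow (by norm_num) h0.le]
    apply le_of_eq
    ring
  · intro y hy
    exact hy.1.1
  · intro y hy
    have hN := basis_norm b y
    simp only [Set.mem_ofPred_eq, Set.mem_Icc] at hy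
    obtain ⟨⟨h2, h3⟩, h4, h5⟩ := hy
    have hs := Real.sq_sqrt h0.le
    have hs0 := Real.sqrt_nonneg h
    have : ‖y‖ ^ 2 ≤ 1 - 1 / 2 * h := by
      have e1 : (inner ℝ (b 1) y) ^ 2 ≤ h / 4 := by nlinarith
      have e2 : (inner ℝ (b 0) y) ^ 2 ≤ (1 - h / 2) ^ 2 := by nlinarith
      nlinarith
    refine ⟨?_, by linarith⟩
    nlinarith [norm_nonneg y]

lemma annulus_upper (β : ℝ) (hβ : 0 ≤ β) : ∃ C : ℝ, 0 < C ∧ ∀ (h : ℝ), 0 < h →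
    h ≤ 1 → betaMeasure β {y | 1 - h < ‖y‖} ≤ ENNReal.ofReal (C * h ^ (β + 1)) := by
  have hpi := Real.pi_pos
  refine ⟨(β + 1) / Real.pi * 2 ^ β * (2 * Real.pi), by positivity, fun h h0 h1 => ?_⟩
  refine (beta_le β (2 * h) hβ _ (Metric.closedBall 0 1 \ Metric.closedBall 0 (1 - h))
    (measurableSet_closedBall.diff measurableSet_closedBall)
    (measurableSet_lt (by fun_prop) (by fun_prop)) ?_).trans ?_
  · intro y hy hn
    simp only [Set.mem_ofPred_eq] at hy
    simp only [Set.mem_sdiff, Metric.mem_closedBall, dist_zero_right, not_le]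
    exact ⟨⟨hn, hy⟩, by nlinarith⟩
  · rw [measure_sdiff (Metric.closedBall_subset_closedBall (by linarith))
      measurableSet_closedBall.nullMeasurableSet
      (measure_closedBall_lt_top).ne, EuclideanSpace.volume_closedBall_fin_two,
      EuclideanSpace.volume_closedBall_fin_two, ← ENNReal.ofReal_pow (by linarith),
      ← ENNReal.ofReal_pow (by linarith), ← ENNReal.ofReal_mul (by positivity),
      ← ENNReal.ofReal_mul (by positivity), ← ENNReal.ofReal_sub _ (by positivity),
      ← ENNReal.ofReal_mul (by positivity)]
    apply ENNReal.ofReal_le_ofReal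
    rw [Real.rpow_add h0, Real.rpow_one, Real.mul_rpow (by norm_num) h0.le]
    have : 1 ^ 2 * Real.pi - (1 - h) ^ 2 * Real.pi ≤ 2 * h * Real.pi := by
      nlinarith [mul_nonneg (sq_nonneg h) hpi.le]
    calc _ ≤ (β + 1) / Real.pi * (2 ^ β * h ^ β) * (2 * h * Real.pi) := by gcongr
      _ = _ := by ring

lemma lost_midpoint (P : Set E2) (hP : P.Nonempty) (x v : E2) (hx : x ∉ convexHull ℝ P)
    (hv : v ∈ Set.extremePoints ℝ (convexHull ℝ P))
    (hv' : v ∉ Set.extremePoints ℝ (convexHull ℝ (insert x P))) :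
    (1 / 2 : ℝ) • (x + v) ∉ convexHull ℝ P := by
  intro hm
  have hvQ : v ∈ convexHull ℝ P := hv.1
  have hsub : convexHull ℝ P ⊆ convexHull ℝ (insert x P) :=
    convexHull_mono (Set.subset_insert _ _)
  have hvx : v ≠ x := fun h => hx (h ▸ hvQ)
  -- key claim
  have key : ∃ l : ℝ, 0 < l ∧ l < 1 ∧ ∃ q ∈ convexHull ℝ P, v = l • x + (1 - l) • q := by
    rw [mem_extremePoints] at hv'
    push Not at hv'
    obtain ⟨a, ha, b, hb, hvab, hne⟩ := hv' (hsub hvQ)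
    have hab : ¬ (a ∈ convexHull ℝ P ∧ b ∈ convexHull ℝ P) := by
      rintro ⟨h1, h2⟩
      have := (mem_extremePoints.1 hv).2 a h1 b h2 hvab
      exact hne this.1 this.2
    rw [convexHull_insert hP, mem_convexJoin] at ha hb
    obtain ⟨x1, hx1, q1, hq1, ha⟩ := ha
    obtain ⟨x2, hx2, q2, hq2, hb⟩ := hb
    rw [Set.mem_singleton_iff] at hx1 hx2
    subst hx1 hx2
    obtain ⟨s1, t1, hs1, ht1, hst1, rfl⟩ := ha
    obtain ⟨s2, t2, hs2, ht2, hst2, rfl⟩ := hb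
    obtain ⟨α, γ, hα, hγ, hαγ, hveq⟩ := hvab
    have hl0 : 0 < α * s1 + γ * s2 := by
      by_contra hc
      have h1 : s1 = 0 := by
        by_contra h
        have := mul_pos hα (lt_of_le_of_ne hs1 (Ne.symm h))
        have := mul_nonneg hγ.le hs2
        linarith
      have h2 : s2 = 0 := by
        by_contra h
        have := mul_pos hγ (lt_of_le_of_ne hs2 (Ne.symm h))
        have := mul_nonneg hα.le hs1
        linarith
      apply hab
      have e1 : t1 = 1 := by linarith
      have e2 : t2 = 1 := by linarith
      subst h1 h2 e1 e2
      simpa using ⟨hq1, hq2⟩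
    have hl : α * s1 + γ * s2 + (α * t1 + γ * t2) = 1 := by
      have : α * (s1 + t1) + γ * (s2 + t2) = 1 := by rw [hst1, hst2]; linarith
      linarith
    have hl1 : 0 < α * t1 + γ * t2 := by
      by_contra hc
      have h1 : t1 = 0 := by
        by_contra h
        have := mul_pos hα (lt_of_le_of_ne ht1 (Ne.symm h))
        have := mul_nonneg hγ.le ht2
        linarith
      have h2 : t2 = 0 := by
        by_contra h
        have := mul_pos hγ (lt_of_le_of_ne ht2 (Ne.symm h))
        have := mul_nonneg hα.le ht1
        linarith
      have e1 : s1 = 1 := by linarith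
      have e2 : s2 = 1 := by linarith
      subst h1 h2 e1 e2
      apply hvx
      rw [← hveq]
      simp [← add_smul, hαγ]
    refine ⟨α * s1 + γ * s2, hl0, by linarith, ?_⟩
    set m := α * t1 + γ * t2 with hmdef
    refine ⟨(α * t1 / m) • q1 + (γ * t2 / m) • q2, ?_, ?_⟩
    · refine (convex_convexHull ℝ P) hq1 hq2 (by positivity) (by positivity) ?_
      rw [← add_div, ← hmdef, div_self hl1.ne']
    · rw [show 1 - (α * s1 + γ * s2) = m by linarith, smul_add, smul_smul, smul_smul,
        mul_div_cancel₀ _ hl1.ne', mul_div_cancel₀ _ hl1.ne', ← hveq]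
      module
  obtain ⟨l, hl0, hl1, q, hq, hveq⟩ := key
  have hseg : v ∈ openSegment ℝ ((1 / 2 : ℝ) • (x + v)) q := by
    refine ⟨2 * l / (1 + l), (1 - l) / (1 + l), by positivity,
      div_pos (by linarith) (by linarith), by field_simp; ring, ?_⟩
    have h1 : (1 - l) • q = v - l • x := by rw [hveq]; module
    have h2 : ((1 - l) / (1 + l)) • q = (1 / (1 + l)) • (v - l • x) := by
      rw [← h1, smul_smul]; congr 1; ring
    rw [h2]
    have h3 : (1 + l) ≠ 0 := by linarith
    have h4 : (2 * l / (1 + l)) • (1 / 2 : ℝ) • (x + v) + (1 / (1 + l)) • (v - l • x)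
        = (l / (1 + l) + 1 / (1 + l)) • v := by module
    rw [h4, ← add_div, add_comm l 1, div_self h3, one_smul]
  have := ((mem_extremePoints.1 hv).2 _ hm _ hq hseg).1
  apply hvx
  have h5 : x + v = (2:ℝ) • v := by
    nth_rewrite 2 [← this]
    module
  have : x = v := by
    have : x = (2:ℝ) • v - v := by rw [← h5]; module
    rw [this]; module
  exact this.symm

lemma lost_inner (x v : E2) (h : ℝ) (h1 : h ≤ 1) (hx : ‖x‖ ≤ 1) (hv : ‖v‖ ≤ 1)
    (hm : 1 - h < ‖(1 / 2 : ℝ) • (x + v)‖) : 1 - 4 * h ≤ inner ℝ x v := by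
  have h2 : ‖x + v‖ ^ 2 = ‖x‖ ^ 2 + 2 * inner ℝ x v + ‖v‖ ^ 2 := norm_add_sq_real x v
  rw [norm_smul] at hm
  norm_num at hm
  have h3 : (2 * (1 - h)) ^ 2 ≤ ‖x + v‖ ^ 2 := by
    apply pow_le_pow_left₀ <;> linarith
  have h4 : ‖x‖ ^ 2 ≤ 1 := pow_le_one₀ (norm_nonneg x) hx
  have h5 : ‖v‖ ^ 2 ≤ 1 := pow_le_one₀ (norm_nonneg v) hv
  nlinarith [sq_nonneg h]

lemma range_last {n : ℕ} (ω : Fin (n + 1) → E2) :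
    Set.range ω = insert (ω (Fin.last n)) (Set.range (ω ∘ Fin.castSucc)) := by
  ext y
  simp only [Set.mem_range, Set.mem_insert_iff, Function.comp]
  constructor
  · rintro ⟨i, rfl⟩
    refine Fin.lastCases ?_ (fun j => ?_) i
    · exact Or.inl rfl
    · exact Or.inr ⟨j, rfl⟩
  · rintro (rfl | ⟨j, rfl⟩)
    · exact ⟨_, rfl⟩
    · exact ⟨_, rfl⟩

lemma vert_le {n : ℕ} (ω : Fin n → E2) : vertCount ω ≤ n := by
  rw [vertCount, Nat.card_coe_set_eq]
  have h1 : (Set.extremePoints ℝ (convexHull ℝ (Set.range ω))).ncard ≤ (Set.range ω).ncard :=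
    Set.ncard_le_ncard extremePoints_convexHull_subset (Set.finite_range ω)
  have h2 : (Set.range ω).ncard ≤ n := by
    rw [← Set.image_univ]
    refine (Set.ncard_image_le Set.finite_univ).trans ?_
    simp [Set.ncard_univ]
  exact_mod_cast h1.trans h2

lemma vert_nonneg {n : ℕ} (ω : Fin n → E2) : 0 ≤ vertCount ω := Nat.cast_nonneg _

lemma det_bound {n : ℕ} (hn : 1 ≤ n) (ω : Fin (n + 1) → E2) (h : ℝ) (h1 : h ≤ 1)
    (hω : ∀ i, ‖ω i‖ ≤ 1)
    (hcov : ∀ y : E2, ‖y‖ ≤ 1 - h → y ∈ convexHull ℝ (Set.range (ω ∘ Fin.castSucc))) :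
    vertCount ω = vertCount (ω ∘ Fin.castSucc) ∨ (1 - h < ‖ω (Fin.last n)‖ ∧
      |vertCount ω - vertCount (ω ∘ Fin.castSucc)| ≤
        1 + ∑ i : Fin n, Set.indicator {q : E2 × E2 | 1 - 4 * h ≤ inner ℝ q.1 q.2}
          (fun _ => (1 : ℝ)) (ω (Fin.last n), ω i.castSucc)) := by
  set x := ω (Fin.last n) with hxdef
  set P := Set.range (ω ∘ Fin.castSucc) with hPdef
  have hPn : P.Nonempty := ⟨_, ⟨⟨0, hn⟩, rfl⟩⟩
  have hPf : P.Finite := Set.finite_range _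
  have hr := range_last ω
  by_cases hx : x ∈ convexHull ℝ P
  · left
    simp only [vertCount, hr]
    have : convexHull ℝ (insert x P) = convexHull ℝ P := by
      apply subset_antisymm
      · apply convexHull_min _ (convex_convexHull ℝ P)
        exact Set.insert_subset hx (subset_convexHull ℝ P)
      · exact convexHull_mono (Set.subset_insert _ _)
    rw [this]
  · right
    refine ⟨not_le.1 fun hc => hx (hcov x hc), ?_⟩
    simp only [vertCount, hr, Nat.card_coe_set_eq]
    rw [← hxdef, ← hPdef]
    set A := Set.extremePoints ℝ (convexHull ℝ (insert x P)) with hA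
    set B := Set.extremePoints ℝ (convexHull ℝ P) with hB
    have hAf : A.Finite := (hPf.insert x).subset extremePoints_convexHull_subset
    have hBf : B.Finite := hPf.subset extremePoints_convexHull_subset
    have hAB : A ⊆ insert x B := by
      intro v hv
      rcases extremePoints_convexHull_subset hv with rfl | hvP
      · exact Set.mem_insert _ _
      · right
        exact inter_extremePoints_subset_extremePoints_of_subset
          (convexHull_mono (Set.subset_insert _ _)) ⟨subset_convexHull ℝ P hvP, hv⟩
    classical
    set I : Finset (Fin n) := Finset.univ.filter
      (fun i => 1 - 4 * h ≤ inner ℝ x (ω i.castSucc)) with hI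
    have hBA : B ⊆ A ∪ (ω ∘ Fin.castSucc) '' (I : Set (Fin n)) := by
      intro v hv
      by_cases hvA : v ∈ A
      · exact Or.inl hvA
      · right
        obtain ⟨i, rfl⟩ := extremePoints_convexHull_subset hv
        refine ⟨i, ?_, rfl⟩
        have := lost_midpoint P hPn x _ hx hv hvA
        simp only [hI, Finset.coe_filter, Finset.mem_univ, true_and]
        exact lost_inner x _ h h1 (hω _) (hω _) (not_le.1 fun hc => this (hcov _ hc))
    have c1 : A.ncard ≤ B.ncard + 1 :=
      (Set.ncard_le_ncard hAB (hBf.insert x)).trans (Set.ncard_insert_le _ _)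
    have c2 : B.ncard ≤ A.ncard + I.card := by
      refine (Set.ncard_le_ncard hBA (hAf.union ((Finset.finite_toSet I).image _))).trans ?_
      refine (Set.ncard_union_le _ _).trans ?_
      gcongr
      refine (Set.ncard_image_le (Finset.finite_toSet I)).trans ?_
      simp
    have hsum : ∑ i : Fin n, Set.indicator {q : E2 × E2 | 1 - 4 * h ≤ inner ℝ q.1 q.2}
          (fun _ => (1 : ℝ)) (x, ω i.castSucc) = I.card := by
      rw [hI, Finset.card_filter]
      push_cast
      apply Finset.sum_congr rfl
      intro i _
      simp [Set.indicator]
    rw [hsum]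
    have c1' : (A.ncard : ℝ) ≤ B.ncard + 1 := by exact_mod_cast c1
    have c2' : (B.ncard : ℝ) ≤ A.ncard + I.card := by exact_mod_cast c2
    have : (0:ℝ) ≤ I.card := Nat.cast_nonneg _
    rw [abs_le]
    constructor <;> linarith

noncomputable def dirv (θ : ℝ) : E2 := !₂[Real.cos θ, Real.sin θ]

lemma dirv_norm (θ : ℝ) : ‖dirv θ‖ = 1 := by
  rw [EuclideanSpace.norm_eq]
  simp [dirv]

lemma dirv_sub (a b : ℝ) : ‖dirv a - dirv b‖ ≤ 2 * |a - b| := by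
  have h1 : |Real.cos a - Real.cos b| ≤ |a - b| := by
    exact Real.abs_cos_sub_cos_le a b
  have h2 : |Real.sin a - Real.sin b| ≤ |a - b| := by
    exact Real.abs_sin_sub_sin_le a b
  apply abs_le_of_sq_le_sq' _ (by positivity) |>.2
  rw [EuclideanSpace.norm_sq_eq]
  simp only [dirv, Fin.sum_univ_two, Real.norm_eq_abs, PiLp.sub_apply]
  simp only [Matrix.cons_val_zero, Matrix.cons_val_one, Matrix.cons_val_fin_one]
  nlinarith [abs_nonneg (Real.cos a - Real.cos b), abs_nonneg (Real.sin a - Real.sin b)]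

lemma exists_dir (w : E2) : ∃ θ : ℝ, |θ| ≤ Real.pi ∧ w = ‖w‖ • dirv θ := by
  refine ⟨Complex.arg ⟨w 0, w 1⟩, Complex.abs_arg_le_pi _, ?_⟩
  have hn : ‖w‖ = ‖(⟨w 0, w 1⟩ : ℂ)‖ := by
    rw [EuclideanSpace.norm_eq, Complex.norm_eq_sqrt_sq_add_sq]
    simp
  rw [hn]
  ext i
  fin_cases i
  · simp [dirv, Complex.norm_mul_cos_arg]
  · simp [dirv, Complex.norm_mul_sin_arg]

lemma cover {n : ℕ} (w : Fin n → E2) (hw : ∀ i, ‖w i‖ ≤ 1) (h δ : ℝ) (hδ : 0 < δ)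
    (hδh : 4 * δ ≤ h) (M : ℕ) (hM : 5 ≤ M * δ) (hδ1 : δ ≤ 1)
    (hcap : ∀ j ∈ Finset.Icc (-(M:ℤ)) M, ∃ i, 1 - h / 2 ≤ inner ℝ (dirv (j * δ)) (w i))
    (y : E2) (hy : ‖y‖ ≤ 1 - h) : y ∈ convexHull ℝ (Set.range w) := by
  by_contra hyQ
  have hcl : IsClosed (convexHull ℝ (Set.range w)) :=
    (Set.finite_range w).isClosed_convexHull ℝ
  obtain ⟨f, c, hf, hc⟩ := geometric_hahn_banach_closed_point
    (convex_convexHull ℝ (Set.range w)) hcl hyQ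
  obtain ⟨g, rfl⟩ := (InnerProductSpace.toDual ℝ E2).surjective f
  simp only [InnerProductSpace.toDual_apply_apply] at hf hc
  obtain ⟨θ, hθ, hg⟩ := exists_dir g
  set j := ⌊θ / δ⌋ with hj
  have h1 : (j : ℝ) * δ ≤ θ := by
    rw [← le_div_iff₀ hδ]; exact Int.floor_le _
  have h2 : θ < (j + 1 : ℝ) * δ := by
    rw [← div_lt_iff₀ hδ]; exact Int.lt_floor_add_one _
  have hpi := Real.pi_lt_four
  have hθ' := abs_le.1 hθ
  have hjM : j ∈ Finset.Icc (-(M:ℤ)) M := by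
    rw [Finset.mem_Icc]
    constructor
    · have : (-(M:ℝ)) ≤ (j:ℝ) := by
        by_contra hc
        push Not at hc
        nlinarith
      exact_mod_cast this
    · have : (j:ℝ) ≤ M := by
        by_contra hc
        push Not at hc
        nlinarith
      exact_mod_cast this
  obtain ⟨i, hi⟩ := hcap j hjM
  have h3 : ‖dirv (j * δ) - dirv θ‖ ≤ 2 * δ := by
    refine (dirv_sub _ _).trans ?_
    have : |j * δ - θ| ≤ δ := by rw [abs_le]; constructor <;> linarith
    linarith
  have h4 : inner ℝ (dirv (j * δ) - dirv θ) (w i) ≤ 2 * δ := by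
    refine (real_inner_le_norm _ _).trans ?_
    nlinarith [norm_nonneg (w i), norm_nonneg (dirv (j * δ) - dirv θ), hw i]
  rw [inner_sub_left] at h4
  have h5 := hf (w i) (subset_convexHull ℝ _ ⟨i, rfl⟩)
  have h6 : inner ℝ g y ≤ ‖g‖ * (1 - h) :=
    (real_inner_le_norm _ _).trans (by gcongr)
  have h7 : inner ℝ g (w i) = ‖g‖ * inner ℝ (dirv θ) (w i) := by
    conv_lhs => rw [hg, real_inner_smul_left]
  have h8 : ‖g‖ * (1 - h) ≤ ‖g‖ * inner ℝ (dirv θ) (w i) := by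
    gcongr
    linarith
  linarith

lemma beta_ae_norm (β : ℝ) : ∀ᵐ x ∂betaMeasure β, ‖x‖ ≤ 1 := by
  rw [betaMeasure, ae_withDensity_iff (beta_dens_meas β)]
  refine Filter.Eventually.of_forall fun x hx => ?_
  by_contra hc
  simp [hc] at hx

lemma pi_ae_norm (β : ℝ) (n : ℕ) : ∀ᵐ ω ∂betaPi β n, ∀ i, ‖ω i‖ ≤ 1 := by
  rw [ae_all_iff]
  intro i
  exact (Measure.quasiMeasurePreserving_eval (μ := fun _ : Fin n => betaMeasure β) i).ae
    (beta_ae_norm β)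

lemma lint_last (μ : Measure E2) [SigmaFinite μ] (n : ℕ) (F : E2 × (Fin n → E2) → ENNReal)
    (hF : Measurable F) :
    ∫⁻ ω : Fin (n + 1) → E2, F (ω (Fin.last n), ω ∘ Fin.castSucc) ∂Measure.pi (fun _ => μ)
      = ∫⁻ x, ∫⁻ w, F (x, w) ∂Measure.pi (fun _ => μ) ∂μ := by
  have hmp := measurePreserving_piFinSuccAbove (fun _ : Fin (n + 1) => μ) (Fin.last n)
  rw [← lintegral_prod _ hF.aemeasurable, ← hmp.lintegral_comp hF]
  apply lintegral_congr
  intro ω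
  congr 1
  ext1
  · rfl
  · ext1 i
    simp [MeasurableEquiv.piFinSuccAbove]
    rfl

lemma lint_pow (μ : Measure E2) [SigmaFinite μ] (g : E2 → ENNReal) (hg : Measurable g) (n : ℕ) :
    ∫⁻ ω : Fin n → E2, ∏ i, g (ω i) ∂Measure.pi (fun _ => μ) = (∫⁻ x, g x ∂μ) ^ n := by
  induction n with
  | zero => simp
  | succ n ih =>
    have hm : Measurable fun w : Fin n → E2 => ∏ i, g (w i) := by fun_prop
    have h := lint_last μ n (fun q => (∏ i, g (q.2 i)) * g q.1) (by fun_prop)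
    simp only [Fin.prod_univ_castSucc]
    refine h.trans ?_
    have h2 : ∀ x, ∫⁻ w, (∏ i, g (w i)) * g x ∂Measure.pi (fun _ : Fin n => μ)
        = (∫⁻ x, g x ∂μ) ^ n * g x := by
      intro x
      rw [lintegral_mul_const _ hm, ih]
    simp only [h2]
    rw [lintegral_const_mul _ hg, pow_succ]

lemma lint_gen (μ : Measure E2) [SigmaFinite μ] (n : ℕ) (ψ : E2 → ENNReal) (hψ : Measurable ψ)
    (φ : E2 × E2 → ENNReal) (hφ : Measurable φ) :
    ∫⁻ ω : Fin (n + 1) → E2, ψ (ω (Fin.last n)) * ∏ i : Fin n, φ (ω (Fin.last n), ω i.castSucc)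
        ∂Measure.pi (fun _ => μ)
      = ∫⁻ x, ψ x * (∫⁻ y, φ (x, y) ∂μ) ^ n ∂μ := by
  refine (lint_last μ n (fun q => ψ q.1 * ∏ i : Fin n, φ (q.1, q.2 i)) (by fun_prop)).trans ?_
  apply lintegral_congr
  intro x
  dsimp only
  rw [lintegral_const_mul _ (by fun_prop)]
  rw [lint_pow μ (fun y => φ (x, y)) (by fun_prop) n]

lemma capx_upper (β : ℝ) (hβ : 0 ≤ β) : ∃ C : ℝ, 0 < C ∧ ∀ (x : E2) (h : ℝ), ‖x‖ ≤ 1 → 0 < h →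
    h < 1 → betaMeasure β {y | 1 - h ≤ inner ℝ x y} ≤ ENNReal.ofReal (C * h ^ (β + 3 / 2)) := by
  obtain ⟨C, hC, H⟩ := cap_upper β hβ
  refine ⟨C, hC, fun x h hx h0 h1 => ?_⟩
  by_cases hx0 : x = 0
  · subst hx0
    have : {y : E2 | 1 - h ≤ inner ℝ (0 : E2) y} = ∅ := by
      ext y
      simp [h1]
    rw [this]
    simp
  · have hxp : 0 < ‖x‖ := norm_pos_iff.2 hx0
    refine le_trans (measure_mono ?_) (H (‖x‖⁻¹ • x) h (by
      rw [norm_smul, norm_inv, norm_norm, inv_mul_cancel₀ hxp.ne']) h0 h1.le)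
    intro y hy
    simp only [Set.mem_ofPred_eq] at hy ⊢
    rw [real_inner_smul_left]
    have : 1 ≤ ‖x‖⁻¹ := (one_le_inv₀ hxp).2 hx
    nlinarith

lemma exp_bound (L : ℝ) (hL : 1 ≤ L) : Real.exp (1 / L) ≤ 1 + 2 / L := by
  have h1 : |1 / L| ≤ 1 := by
    rw [abs_of_nonneg (by positivity), div_le_one (by linarith)]; exact hL
  have := Real.abs_exp_sub_one_le h1
  rw [abs_of_nonneg (by positivity : 0 ≤ 1 / L)] at this
  have h2 := (abs_le.1 this).2
  have : 2 / L = 2 * (1 / L) := by ring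
  linarith

lemma good_pointwise {n : ℕ} (p : ℕ) (L : ℝ) (hL : 1 ≤ L) (T : Set (E2 × E2)) (q : Fin n → E2 × E2)
    (D : ℝ) (hD0 : 0 ≤ D)
    (hD : D ≤ 1 + ∑ i : Fin n, T.indicator (fun _ => (1 : ℝ)) (q i)) :
    ENNReal.ofReal (D ^ p) ≤ ENNReal.ofReal (p.factorial * L ^ p * Real.exp 1) *
      ∏ i, (1 + T.indicator (fun _ => ENNReal.ofReal (2 / L)) (q i)) := by
  have hL0 : 0 < L := by linarith
  have h1 : ∀ i, (1 + T.indicator (fun _ => ENNReal.ofReal (2 / L)) (q i))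
      = ENNReal.ofReal (1 + T.indicator (fun _ => 2 / L) (q i)) := by
    intro i
    rw [ENNReal.ofReal_add (by norm_num) (Set.indicator_nonneg (fun _ _ => by positivity) _)]
    simp only [Set.indicator]
    split_ifs <;> simp
  simp only [h1]
  have h2 : ∀ i, 0 ≤ 1 + T.indicator (fun _ => 2 / L) (q i) := fun i =>
    add_nonneg zero_le_one (Set.indicator_nonneg (fun _ _ => by positivity) _)
  rw [← ENNReal.ofReal_prod_of_nonneg (fun i _ => h2 i), ← ENNReal.ofReal_mul (by positivity)]
  apply ENNReal.ofReal_le_ofReal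
  have h3 := Real.pow_div_factorial_le_exp (D / L) (by positivity) p
  rw [div_le_iff₀ (by positivity), div_pow, div_le_iff₀ (by positivity)] at h3
  have h4 : Real.exp (D / L) ≤ Real.exp 1 * ∏ i, (1 + T.indicator (fun _ => 2 / L) (q i)) := by
    have h5 : D / L ≤ 1 + ∑ i : Fin n, T.indicator (fun _ => 1 / L) (q i) := by
      have : (1 + ∑ i : Fin n, T.indicator (fun _ => (1 : ℝ)) (q i)) / L
          = 1 / L + ∑ i : Fin n, T.indicator (fun _ => 1 / L) (q i) := by
        rw [add_div, Finset.sum_div]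
        congr 1
        apply Finset.sum_congr rfl
        intro i _
        simp only [Set.indicator]
        split_ifs <;> simp
      have h6 : 1 / L ≤ 1 := by rw [div_le_one hL0]; exact hL
      calc D / L ≤ (1 + ∑ i : Fin n, T.indicator (fun _ => (1 : ℝ)) (q i)) / L := by gcongr
        _ ≤ _ := by rw [this]; linarith
    refine (Real.exp_le_exp.2 h5).trans ?_
    rw [Real.exp_add, Real.exp_sum]
    gcongr with i _
    simp only [Set.indicator]
    split_ifs
    · exact exp_bound L hL
    · simp
  calc D ^ p ≤ Real.exp (D / L) * p.factorial * L ^ p := h3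
    _ ≤ (Real.exp 1 * ∏ i, (1 + T.indicator (fun _ => 2 / L) (q i))) * p.factorial * L ^ p := by
      gcongr
    _ = _ := by ring

lemma moment_bound (β : ℝ) (hβ : 0 ≤ β) (p : ℕ) (hp : 1 ≤ p) : ∃ C1 C2 C3 : ℝ, 0 < C1 ∧ 0 < C2 ∧ 0 < C3 ∧
    ∀ (n : ℕ) (h L : ℝ), 1 ≤ n → 1 ≤ L → 0 < h → 4 * h < 1 → 4 / n ≤ h →
      (∫ ω : Fin (n + 1) → EuclideanSpace ℝ (Fin 2),
          |vertCount ω - vertCount (ω ∘ Fin.castSucc)| ^ p ∂ betaPi β (n + 1)) ≤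
      11 * n * (2 * n) ^ p * Real.exp (-(n * (C1 * (h / 2) ^ (β + 3 / 2)))) +
      p.factorial * L ^ p * Real.exp 1 * (C2 * h ^ (β + 1)) *
        Real.exp (n * (2 / L * (C3 * (4 * h) ^ (β + 3 / 2)))) := by
  have := beta_prob β hβ
  obtain ⟨C1, hC1, H1⟩ := cap_lower β hβ
  obtain ⟨C2, hC2, H2⟩ := annulus_upper β hβ
  obtain ⟨C3, hC3, H3⟩ := capx_upper β hβ
  refine ⟨C1, C2, C3, hC1, hC2, hC3, fun n h L hn hL h0 h1 hnh => ?_⟩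
  have hn1 : (1:ℝ) ≤ n := by exact_mod_cast hn
  have hL0 : 0 < L := by linarith
  set δ : ℝ := 1 / n with hδ
  have hδ0 : 0 < δ := by positivity
  set μ := betaMeasure β with hμ
  set T : Set (E2 × E2) := {q : E2 × E2 | 1 - 4 * h ≤ inner ℝ q.1 q.2} with hT
  have hTm : MeasurableSet T := measurableSet_le (by fun_prop) (by fun_prop)
  set R : Set E2 := {y | 1 - h < ‖y‖} with hR
  have hRm : MeasurableSet R := measurableSet_lt (by fun_prop) (by fun_prop)
  set cap : ℤ → Set E2 := fun j => {y | 1 - h / 2 ≤ inner ℝ (dirv (j * δ)) y} with hcap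
  have hcapm : ∀ j, MeasurableSet (cap j) := fun j => measurableSet_le (by fun_prop) (by fun_prop)
  set J := Finset.Icc (-((5 * n : ℕ):ℤ)) ((5 * n : ℕ):ℤ) with hJ
  set G1 : (Fin (n + 1) → E2) → ENNReal := fun ω => ∑ j ∈ J,
    ENNReal.ofReal ((2 * n) ^ p) * ∏ i : Fin n, (cap j)ᶜ.indicator (fun _ => (1 : ENNReal))
      (ω i.castSucc) with hG1
  set G2 : (Fin (n + 1) → E2) → ENNReal := fun ω =>
    R.indicator (fun _ => ENNReal.ofReal (p.factorial * L ^ p * Real.exp 1)) (ω (Fin.last n)) *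
      ∏ i : Fin n, (1 + T.indicator (fun _ => ENNReal.ofReal (2 / L))
        (ω (Fin.last n), ω i.castSucc)) with hG2
  have hpt : ∀ᵐ ω ∂betaPi β (n + 1),
      ENNReal.ofReal (|vertCount ω - vertCount (ω ∘ Fin.castSucc)| ^ p) ≤ G1 ω + G2 ω := by
    filter_upwards [pi_ae_norm β (n + 1)] with ω hω
    by_cases hall : ∀ j ∈ J, ∃ i : Fin n, ω i.castSucc ∈ cap j
    · have hcov : ∀ y : E2, ‖y‖ ≤ 1 - h → y ∈ convexHull ℝ (Set.range (ω ∘ Fin.castSucc)) := by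
        refine cover (ω ∘ Fin.castSucc) (fun i => hω _) h δ hδ0 ?_ (5 * n) ?_ ?_ hall
        · rw [hδ]; calc _ = 4 / (n:ℝ) := by ring
            _ ≤ h := hnh
        · rw [hδ]; push_cast; apply le_of_eq; field_simp
        · rw [hδ, div_le_one (by positivity)]; exact hn1
      rcases det_bound hn ω h (by linarith) hω hcov with hD | ⟨hD1, hD2⟩
      · rw [hD]
        have : p ≠ 0 := by omega
        simp [this]
      · refine le_trans ?_ le_add_self
        simp only [hG2]
        rw [Set.indicator_of_mem (show ω (Fin.last n) ∈ R from hD1)]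
        exact good_pointwise p L hL T _ _ (abs_nonneg _) hD2
    · push Not at hall
      obtain ⟨j, hj, hji⟩ := hall
      have hone : ∏ i : Fin n, (cap j)ᶜ.indicator (fun _ => (1 : ENNReal)) (ω i.castSucc) = 1 := by
        apply Finset.prod_eq_one
        intro i _
        rw [Set.indicator_of_mem]
        exact hji i
      refine le_trans ?_ le_self_add
      refine le_trans ?_ (Finset.single_le_sum (f := fun j => ENNReal.ofReal ((2 * n) ^ p) *
        ∏ i : Fin n, (cap j)ᶜ.indicator (fun _ => (1 : ENNReal)) (ω i.castSucc))
        (fun _ _ => zero_le) hj)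
      simp only [hone, mul_one]
      apply ENNReal.ofReal_le_ofReal
      gcongr
      have a1 := vert_le ω
      have a2 := vert_le (ω ∘ Fin.castSucc)
      have a3 := vert_nonneg ω
      have a4 := vert_nonneg (ω ∘ Fin.castSucc)
      push_cast at a1
      rw [abs_le]
      constructor <;> linarith
  have hI1 : ∫⁻ ω, G1 ω ∂betaPi β (n + 1) ≤ ENNReal.ofReal
      (11 * n * (2 * n) ^ p * Real.exp (-(n * (C1 * (h / 2) ^ (β + 3 / 2))))) := by
    rw [hG1, lintegral_finsetSum]
    · have hj : ∀ j ∈ J, ∫⁻ ω, ENNReal.ofReal ((2 * n) ^ p) * ∏ i : Fin n, (cap j)ᶜ.indicator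
          (fun _ => (1 : ENNReal)) (ω i.castSucc) ∂betaPi β (n + 1) ≤ ENNReal.ofReal
          ((2 * n) ^ p * Real.exp (-(n * (C1 * (h / 2) ^ (β + 3 / 2))))) := by
        intro j _
        have := lint_gen μ n (fun _ => ENNReal.ofReal ((2 * n) ^ p)) measurable_const
          (fun q => (cap j)ᶜ.indicator (fun _ => (1 : ENNReal)) q.2)
          ((measurable_const.indicator (hcapm j).compl).comp measurable_snd)
        rw [betaPi]
        refine this.le.trans ?_
        simp only [lintegral_const, measure_univ, mul_one]
        rw [lintegral_indicator_const (hcapm j).compl, one_mul,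
          prob_compl_eq_one_sub (hcapm j)]
        have hc := H1 (dirv (j * δ)) (h / 2) (dirv_norm _) (by positivity) (by linarith)
        set m := C1 * (h / 2) ^ (β + 3 / 2) with hm
        have hm0 : 0 ≤ m := by positivity
        have : (1 - μ (cap j)) ≤ ENNReal.ofReal (Real.exp (-m)) := by
          calc 1 - μ (cap j) ≤ 1 - ENNReal.ofReal m := tsub_le_tsub_left hc _
            _ = ENNReal.ofReal (1 - m) := by rw [ENNReal.ofReal_sub _ hm0, ENNReal.ofReal_one]
            _ ≤ _ := by
              apply ENNReal.ofReal_le_ofReal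
              have := Real.add_one_le_exp (-m)
              linarith
        rw [ENNReal.ofReal_mul (by positivity)]
        gcongr
        refine (pow_le_pow_left' this n).trans ?_
        rw [← ENNReal.ofReal_pow (by positivity), ← Real.exp_nat_mul]
        apply ENNReal.ofReal_le_ofReal
        apply le_of_eq
        congr 1
        ring
      refine (Finset.sum_le_sum hj).trans ?_
      rw [Finset.sum_const, nsmul_eq_mul, ← ENNReal.ofReal_natCast,
        ← ENNReal.ofReal_mul (by positivity)]
      apply ENNReal.ofReal_le_ofReal
      rw [mul_assoc (11 * (n:ℝ))]
      gcongr
      have : J.card = 10 * n + 1 := by rw [hJ, Int.card_Icc]; omega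
      rw [this]; push_cast; linarith
    · intro j _
      refine Measurable.const_mul ?_ _
      refine Finset.measurable_prod _ fun i _ => ?_
      exact (measurable_const.indicator (hcapm j).compl).comp (measurable_pi_apply _)
  have hI2 : ∫⁻ ω, G2 ω ∂betaPi β (n + 1) ≤ ENNReal.ofReal
      (p.factorial * L ^ p * Real.exp 1 * (C2 * h ^ (β + 1)) *
        Real.exp (n * (2 / L * (C3 * (4 * h) ^ (β + 3 / 2))))) := by
    have hg := lint_gen μ n
      (R.indicator (fun _ => ENNReal.ofReal (p.factorial * L ^ p * Real.exp 1)))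
      (measurable_const.indicator hRm)
      (fun q => 1 + T.indicator (fun _ => ENNReal.ofReal (2 / L)) q)
      (measurable_const.add (measurable_const.indicator hTm))
    rw [hG2, betaPi]
    refine hg.le.trans ?_
    set m := 2 / L * (C3 * (4 * h) ^ (β + 3 / 2)) with hm
    have hm0 : 0 ≤ m := by positivity
    calc _ ≤ ∫⁻ x, R.indicator (fun _ => ENNReal.ofReal (p.factorial * L ^ p * Real.exp 1)) x *
          ENNReal.ofReal (Real.exp (n * m)) ∂μ := by
          refine lintegral_mono_ae ?_
          filter_upwards [beta_ae_norm β] with x hx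
          gcongr
          have hTx : MeasurableSet {y : E2 | 1 - 4 * h ≤ inner ℝ x y} :=
            measurableSet_le (by fun_prop) (by fun_prop)
          have e1 : ∫⁻ y, (1 + T.indicator (fun _ => ENNReal.ofReal (2 / L)) (x, y)) ∂μ
              ≤ ENNReal.ofReal (Real.exp m) := by
            rw [lintegral_add_left measurable_const]
            have : ∀ y, T.indicator (fun _ => ENNReal.ofReal (2 / L)) (x, y)
              = {y : E2 | 1 - 4 * h ≤ inner ℝ x y}.indicator
                (fun _ => ENNReal.ofReal (2 / L)) y := fun y => rfl
            simp only [this]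
            rw [lintegral_indicator_const hTx, lintegral_const, measure_univ, mul_one]
            have hc := H3 x (4 * h) hx (by positivity) h1
            calc _ ≤ 1 + ENNReal.ofReal (2 / L) *
                  ENNReal.ofReal (C3 * (4 * h) ^ (β + 3 / 2)) := by gcongr
              _ = ENNReal.ofReal (1 + m) := by
                rw [← ENNReal.ofReal_mul (by positivity), ENNReal.ofReal_add zero_le_one hm0,
                  ENNReal.ofReal_one]
              _ ≤ _ := by
                apply ENNReal.ofReal_le_ofReal
                have := Real.add_one_le_exp m
                linarith
          refine (pow_le_pow_left' e1 n).trans ?_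
          rw [← ENNReal.ofReal_pow (by positivity), ← Real.exp_nat_mul]
      _ = ENNReal.ofReal (p.factorial * L ^ p * Real.exp 1) * μ R *
          ENNReal.ofReal (Real.exp (n * m)) := by
          rw [lintegral_mul_const _ (measurable_const.indicator hRm),
            lintegral_indicator_const hRm]
      _ ≤ ENNReal.ofReal (p.factorial * L ^ p * Real.exp 1) *
          ENNReal.ofReal (C2 * h ^ (β + 1)) * ENNReal.ofReal (Real.exp (n * m)) := by
          gcongr
          exact H2 h h0 (by linarith)
      _ = _ := by
          rw [← ENNReal.ofReal_mul (by positivity), ← ENNReal.ofReal_mul (by positivity)]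
  have hG1m : Measurable G1 := by
    refine Finset.measurable_sum _ fun j _ => ?_
    refine Measurable.const_mul ?_ _
    refine Finset.measurable_prod _ fun i _ => ?_
    exact (measurable_const.indicator (hcapm j).compl).comp (measurable_pi_apply _)
  have htot : ∫⁻ ω, ENNReal.ofReal (|vertCount ω - vertCount (ω ∘ Fin.castSucc)| ^ p)
      ∂betaPi β (n + 1) ≤ ENNReal.ofReal
      (11 * n * (2 * n) ^ p * Real.exp (-(n * (C1 * (h / 2) ^ (β + 3 / 2)))) +
      p.factorial * L ^ p * Real.exp 1 * (C2 * h ^ (β + 1)) *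
        Real.exp (n * (2 / L * (C3 * (4 * h) ^ (β + 3 / 2))))) := by
    refine (lintegral_mono_ae hpt).trans ?_
    rw [lintegral_add_left hG1m, ENNReal.ofReal_add (by positivity) (by positivity)]
    exact add_le_add hI1 hI2
  by_cases hms : AEStronglyMeasurable (fun ω : Fin (n + 1) → E2 =>
      |vertCount ω - vertCount (ω ∘ Fin.castSucc)| ^ p) (betaPi β (n + 1))
  · rw [integral_eq_lintegral_of_nonneg_ae (Filter.Eventually.of_forall fun ω => by positivity) hms]
    exact ENNReal.toReal_le_of_le_ofReal (by positivity) htot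
  · rw [integral_non_aestronglyMeasurable hms]
    positivity

/-- moments of the first order difference of the vertex count. For
`d ≥ 4`, `β = d/2 - 2` and `p ≥ 1` there are `c > 0` and `N₀` such that for `n ≥ N₀`,
`E[ |f₀(Q_{n+1}) - f₀(Qₙ)|^p ] ≤ c·(log n)^{p+1-1/(d-1)}·n^{1/(d-1)-1}`. -/
theorem first_order_difference_moments (d : ℕ) (hd : 4 ≤ d)
    (β : ℝ) (hβ : β = (d : ℝ) / 2 - 2) (p : ℕ) (hp : 1 ≤ p) :
    ∃ c : ℝ, 0 < c ∧ ∃ N₀ : ℕ, ∀ n : ℕ, N₀ ≤ n →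
      (∫ ω : Fin (n + 1) → EuclideanSpace ℝ (Fin 2),
          |vertCount ω - vertCount (ω ∘ Fin.castSucc)| ^ p ∂ betaPi β (n + 1)) ≤
        c * Real.log n ^ ((p : ℝ) + 1 - 1 / ((d : ℝ) - 1)) *
          (n : ℝ) ^ (1 / ((d : ℝ) - 1) - 1) := by
  have hd' : (4:ℝ) ≤ d := by exact_mod_cast hd
  have hβ0 : 0 ≤ β := by rw [hβ]; linarith
  obtain ⟨C1, C2, C3, hC1, hC2, hC3, H⟩ := moment_bound β hβ0 p hp
  set a : ℝ := β + 3 / 2 with ha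
  have ha0 : 0 < a := by positivity
  have ha1 : 1 ≤ a := by linarith
  set γ : ℝ := (β + 1) / a with hγ
  have hda : (d : ℝ) - 1 = 2 * a := by rw [ha, hβ]; ring
  have hγ' : 1 - 1 / ((d : ℝ) - 1) = γ := by
    rw [hda, hγ]
    field_simp
    rw [ha]
    ring
  have hγ0 : 0 ≤ γ := by positivity
  have hγ1 : γ ≤ 1 := by rw [hγ, div_le_one ha0, ha]; linarith
  set K : ℝ := max 4 ((p + 2) / (C1 * (1 / 2) ^ a)) with hK
  have hK4 : 4 ≤ K := le_max_left _ _
  have hKp : (p + 2 : ℝ) ≤ K * (C1 * (1 / 2) ^ a) := by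
    rw [← div_le_iff₀ (by positivity)]
    exact le_max_right _ _
  have hK0 : 0 < K := by linarith
  set c2 : ℝ := p.factorial * Real.exp 1 * C2 * K ^ γ * Real.exp (2 * C3 * 4 ^ a * K) with hc2
  refine ⟨11 * 2 ^ p + c2, by positivity, ?_⟩
  have ht : Filter.Tendsto (fun n : ℕ => K * (Real.log n / n)) Filter.atTop (nhds 0) := by
    have h1 : Filter.Tendsto (fun x : ℝ => Real.log x / x) Filter.atTop (nhds 0) :=
      Real.isLittleO_log_id_atTop.tendsto_div_nhds_zero
    have h2 := (h1.comp (tendsto_natCast_atTop_atTop (R := ℝ))).const_mul K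
    simpa using h2
  have hev1 : ∀ᶠ n : ℕ in Filter.atTop, K * (Real.log n / n) < (1 / 4) ^ a :=
    ht.eventually (gt_mem_nhds (by positivity))
  have hev2 : ∀ᶠ n : ℕ in Filter.atTop, 1 ≤ Real.log n :=
    (Real.tendsto_log_atTop.comp (tendsto_natCast_atTop_atTop (R := ℝ))).eventually
      (Filter.eventually_ge_atTop 1)
  obtain ⟨N₀, hN₀⟩ := Filter.eventually_atTop.1
    ((hev1.and hev2).and (Filter.eventually_ge_atTop 1))
  refine ⟨N₀, fun n hn => ?_⟩
  obtain ⟨⟨hs, hL⟩, hn1⟩ := hN₀ n hn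
  set L := Real.log n with hLdef
  have hn1' : (1:ℝ) ≤ n := by exact_mod_cast hn1
  have hn0 : (0:ℝ) < n := by linarith
  have hL0 : 0 < L := by linarith
  set r : ℝ := K * (L / n) with hr
  have hr0 : 0 < r := by positivity
  have hr1 : r ≤ 1 := hs.le.trans (Real.rpow_le_one (by norm_num) (by norm_num) ha0.le)
  set h : ℝ := r ^ (1 / a) with hh
  have hh0 : 0 < h := by positivity
  have hha : h ^ a = r := by
    rw [hh, ← Real.rpow_mul hr0.le, one_div_mul_cancel ha0.ne', Real.rpow_one]
  have hhβ : h ^ (β + 1) = K ^ γ * L ^ γ * (n : ℝ) ^ (-γ) := by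
    rw [hh, ← Real.rpow_mul hr0.le, one_div_mul_eq_div, ← hγ, hr,
      Real.mul_rpow hK0.le (by positivity), Real.div_rpow hL0.le hn0.le, Real.rpow_neg hn0.le]
    ring
  have h4 : 4 * h < 1 := by
    have : h < 1 / 4 := by
      by_contra hc
      push Not at hc
      have := Real.rpow_le_rpow (by norm_num) hc ha0.le
      rw [hha] at this
      linarith
    linarith
  have hnh : 4 / n ≤ h := by
    have h5 : r ≤ h := by
      have := Real.rpow_le_rpow_of_exponent_ge hr0 hr1
        (show 1 / a ≤ 1 by rw [div_le_one ha0]; exact ha1)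
      rwa [Real.rpow_one] at this
    refine le_trans ?_ h5
    rw [hr, ← mul_div_assoc]
    gcongr
    nlinarith
  refine (H n h L hn1 hL hh0 h4 hnh).trans ?_
  have hE1 : (p : ℝ) + 1 - 1 / ((d : ℝ) - 1) = p + γ := by rw [← hγ']; ring
  have hE2 : 1 / ((d : ℝ) - 1) - 1 = -γ := by rw [← hγ']; ring
  rw [hE1, hE2, add_mul, add_mul]
  have hLp : L ^ ((p:ℝ) + γ) = L ^ p * L ^ γ := by
    rw [Real.rpow_add hL0, Real.rpow_natCast]
  apply add_le_add
  · have e1 : Real.exp (-(n * (C1 * (h / 2) ^ a))) ≤ 1 / (n : ℝ) ^ (p + 2) := by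
      have e2 : n * (C1 * (h / 2) ^ a) = K * (C1 * (1 / 2) ^ a) * L := by
        rw [div_eq_mul_one_div h 2, Real.mul_rpow hh0.le (by norm_num), hha, hr]
        field_simp
      rw [e2]
      calc Real.exp (-(K * (C1 * (1 / 2) ^ a) * L)) ≤ Real.exp (-((p + 2) * L)) := by
            apply Real.exp_le_exp.2
            have := mul_le_mul_of_nonneg_right hKp hL0.le
            linarith
        _ = 1 / (n : ℝ) ^ (p + 2) := by
            rw [Real.exp_neg, one_div]
            congr 1
            rw [← Real.exp_log (pow_pos hn0 (p + 2)), Real.log_pow]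
            push_cast
            rfl
    calc _ ≤ 11 * n * (2 * n) ^ p * (1 / (n : ℝ) ^ (p + 2)) := by gcongr
      _ = 11 * 2 ^ p * 1 * (n : ℝ) ^ (-1 : ℝ) := by
          rw [Real.rpow_neg_one, mul_pow, pow_add]
          field_simp
      _ ≤ _ := by
          gcongr
          · exact Real.one_le_rpow hL (by positivity)
  · apply le_of_eq
    have e3 : n * (2 / L * (C3 * (4 * h) ^ a)) = 2 * C3 * 4 ^ a * K := by
      rw [Real.mul_rpow (by norm_num) hh0.le, hha, hr]
      field_simp
    rw [e3, hhβ, hLp, hc2]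
    ring
end
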